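/- Let p be a prime, Γ a subgroup of F_p^*, and Γ_1, …, Γ_n cosets of Γ in F_p^* (Γ_i = g_i Γ with g_i ∈ F_p^*), n ≥ 2. Let f_1(x), …, f_n(x) ∈ F_p[x] be an admissible set of polynomials of degrees m_1 ≤ m_2 ≤ … ≤ m_n, and set M = {x ∈ F_p : f_i(x) ∈ Γ_i for all i = 1, …, n}. If 2^{2n} m_n^{4n} < |Γ| < (n+1)^{-2n/(2n+1)} (m_1 ⋯ m_n)^{-2/(2n+1)} · p^{1 - 1/(2n+1)}, then |M| ≤ 4(n+1)(m_1 + ⋯ + m_n)(m_1 ⋯ m_n)^{1/n} · |Γ|^{1/2 + 1/(2n)}. -/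

import Mathlib

/-- A set of polynomials `f 0, …, f (n-1)` is admissible if there exist points
`x 0, …, x (n-1)` with `f i (x i) = 0`, `f j (x i) ≠ 0` for `j ≠ i`,
and `f i 0 ≠ 0` for all `i`. -/
def AdmissibleSet {n : ℕ} {K : Type*} [CommRing K] (f : Fin n → Polynomial K) : Prop :=
  ∃ x : Fin n → K, (∀ i, (f i).eval (x i) = 0) ∧
    (∀ i j, j ≠ i → (f j).eval (x i) ≠ 0) ∧ (∀ i, (f i).eval 0 ≠ 0)

/-!
Stepanov's method. Put `t = |Γ|`. At a point `y` of the set to be counted, each `f i (y) ^ t` equals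
the constant `c i = g i ^ t`. Hence the derivatives at `y` of an auxiliary polynomial
`Ψ = ∑ b ∈ S, P b * ∏ i, f i ^ (t * b i)` are, up to powers of the nonzero number `∏ i, f i (y)`,
values of polynomials whose degree does not grow with `t`. Linear algebra provides polynomials `P b`
of small degree, not all zero, for which the first `E + 1` of these vanish identically. Then `Ψ`
vanishes to order greater than `E` at every such `y`, and there are at most `deg Ψ / (E + 1)` of
them.

The crux is that `Ψ ≠ 0`. In a shortest combination that vanishes, dividing by the lowest power of a
suitable `f i` leaves linearly independent terms `P b * G b` with `G b (x i) ≠ 0` whose sum is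
divisible by `f i ^ t`. By Cramer's rule, its order of vanishing at `x i` is at most the degree of a
nonzero Wronskian-type determinant, which is less than `t`. The determinant is nonzero because all
the degrees involved are below the characteristic.
-/

open Polynomial Finset

section TwistedDerivative

variable {R : Type*} [CommRing R]

/-- The operator `P ↦ F ^ k * G⁻¹ * D ^ k (P * G)`, where `D` is the derivative and `G` is any
polynomial whose logarithmic derivative is `H / F`. Defining it by recursion from `F` and `H`
alone makes it visibly linear and defined on all polynomials. -/
noncomputable def twistedDerivative (F H : R[X]) : ℕ → R[X] →ₗ[R] R[X]
  | 0 => LinearMap.id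
  | k + 1 => (LinearMap.mulLeft R F ∘ₗ derivative +
      LinearMap.mulLeft R (H - (k : R[X]) * derivative F)) ∘ₗ twistedDerivative F H k

lemma twistedDerivative_succ_apply (F H P : R[X]) (k : ℕ) :
    twistedDerivative F H (k + 1) P = F * derivative (twistedDerivative F H k P) +
      (H - (k : R[X]) * derivative F) * twistedDerivative F H k P := rfl

lemma twistedDerivative_mul {F G H : R[X]} (hG : F * derivative G = H * G) (k : ℕ) (P : R[X]) :
    twistedDerivative F H k P * G = F ^ k * derivative^[k] (P * G) := by
  induction k with
  | zero => simp [twistedDerivative]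
  | succ k ih =>
    have hderiv := congrArg derivative ih
    have hpow : F * derivative (F ^ k) = (k : R[X]) * derivative F * F ^ k := by
      cases k with
      | zero => simp
      | succ k => simp only [derivative_pow, map_natCast, Nat.add_sub_cancel]; ring
    rw [derivative_mul, derivative_mul] at hderiv
    rw [twistedDerivative_succ_apply, Function.iterate_succ_apply']
    linear_combination F * hderiv + derivative^[k] (P * G) * hpow
      - twistedDerivative F H k P * hG - (k : R[X]) * derivative F * ih

lemma natDegree_twistedDerivative_le {F H : R[X]} {s : ℕ} (hF : F.natDegree ≤ s)
    (hH : H.natDegree ≤ s) (k : ℕ) (P : R[X]) :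
    (twistedDerivative F H k P).natDegree ≤ P.natDegree + k * s := by
  induction k with
  | zero => simp [twistedDerivative]
  | succ k ih =>
    have hF' : ((k : R[X]) * derivative F).natDegree ≤ s := by
      rw [← C_eq_natCast]
      exact (natDegree_C_mul_le _ _).trans ((natDegree_derivative_le F).trans (by lia))
    have hT' : (derivative (twistedDerivative F H k P)).natDegree ≤ P.natDegree + k * s :=
      (natDegree_derivative_le _).trans ((Nat.sub_le _ _).trans ih)
    rw [twistedDerivative_succ_apply, add_mul, one_mul, ← add_assoc, add_comm _ s]
    exact natDegree_add_le_of_degree_le (natDegree_mul_le_of_le hF hT')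
      (natDegree_mul_le_of_le (natDegree_sub_le_of_le hH hF' |>.trans_eq (max_self s)) ih)

end TwistedDerivative

section LogDerivative

variable {R ι : Type*} [CommRing R] [Fintype ι] [DecidableEq ι]

/-- The numerator of the logarithmic derivative of `∏ i ∈ s, f i ^ e i` over the common
denominator `∏ i, f i`. The denominator runs over all of `ι` so that products over different sets
`s` share it. -/
noncomputable def logDerivNumerator (f : ι → R[X]) (s : Finset ι) (e : ι → ℕ) : R[X] :=
  ∑ i ∈ s, (∏ j ∈ univ.erase i, f j) * (C (e i : R) * derivative (f i))

lemma prod_mul_derivative_prod_pow (f : ι → R[X]) (s : Finset ι) (e : ι → ℕ) :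
    (∏ i, f i) * derivative (∏ i ∈ s, f i ^ e i) =
      logDerivNumerator f s e * ∏ i ∈ s, f i ^ e i := by
  rw [derivative_prod_finset, mul_sum, logDerivNumerator, sum_mul]
  refine sum_congr rfl fun i hi ↦ ?_
  rw [← mul_prod_erase univ f (mem_univ i), ← mul_prod_erase s (fun j ↦ f j ^ e j) hi,
    derivative_pow]
  cases e i with
  | zero => simp
  | succ k => simp only [Nat.add_sub_cancel]; ring

lemma natDegree_logDerivNumerator_le (f : ι → R[X]) (s : Finset ι) (e : ι → ℕ) :
    (logDerivNumerator f s e).natDegree ≤ ∑ i, (f i).natDegree := by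
  refine natDegree_sum_le_of_forall_le _ _ fun i _ ↦ ?_
  rw [← sum_erase_add univ _ (mem_univ i)]
  refine natDegree_mul_le_of_le (natDegree_prod_le _ _) ?_
  exact (natDegree_C_mul_le _ _).trans ((natDegree_derivative_le _).trans (Nat.sub_le _ _))

end LogDerivative

section Wronskian

/-- The Wronskian matrix of a tuple of polynomials, with `D ^ k (v b)` in row `k` and column `b`. -/
noncomputable def wronskianMatrix {R : Type*} [Semiring R] {r : ℕ} (v : Fin r → R[X]) :
    Matrix (Fin r) (Fin r) R[X] :=
  .of fun k b ↦ derivative^[k] (v b)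

lemma natCast_injOn_Iic {K : Type*} [Ring K] {N : ℕ} (hN : (N.factorial : K) ≠ 0) :
    Set.InjOn (Nat.cast : ℕ → K) (Set.Iic N) := by
  have cast_sub_ne_zero {i j : ℕ} (hij : i < j) (hj : j ≤ N) : ((j - i : ℕ) : K) ≠ 0 := by
    obtain ⟨c, hc⟩ := Nat.dvd_factorial (Nat.sub_pos_of_lt hij) ((Nat.sub_le j i).trans hj)
    intro h
    exact hN (by rw [hc, Nat.cast_mul, h, zero_mul])
  intro i hi j hj hij
  by_contra hne
  rcases Nat.lt_or_gt_of_ne hne with h | h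
  · exact cast_sub_ne_zero h hj (by rw [Nat.cast_sub h.le, hij, sub_self])
  · exact cast_sub_ne_zero h hi (by rw [Nat.cast_sub h.le, hij, sub_self])

variable {K : Type*} [Field K]

lemma linearIndependent_descPochhammer : LinearIndependent K (descPochhammer K) := by
  let S : Polynomial.Sequence K :=
    ⟨descPochhammer K, fun k ↦ by
      rw [degree_eq_natDegree (monic_descPochhammer K k).ne_zero, descPochhammer_natDegree]⟩
  exact S.linearIndependent

lemma exists_ne_zero_mem_span_coeff_eq_zero {r : ℕ} {v : Fin r → K[X]}
    (hv : LinearIndependent K v) {Z : Finset ℕ} (hZ : #Z < r) :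
    ∃ w ∈ Submodule.span K (Set.range v), w ≠ 0 ∧ ∀ d ∈ Z, w.coeff d = 0 := by
  let Φ : (Fin r → K) →ₗ[K] (Z → K) :=
    LinearMap.pi fun d ↦ lcoeff K d ∘ₗ Fintype.linearCombination K v
  have hker : LinearMap.ker Φ ≠ ⊥ := LinearMap.ker_ne_bot_of_finrank_lt (by simpa)
  obtain ⟨α, hα, hα0⟩ := Submodule.exists_mem_ne_zero_of_ne_bot hker
  refine ⟨Fintype.linearCombination K v α, ?_, fun h ↦ ?_, fun d hd ↦ ?_⟩
  · rw [← Fintype.range_linearCombination]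
    exact ⟨α, rfl⟩
  · exact hα0 (hv.fintypeLinearCombination_injective (h.trans (map_zero _).symm))
  · exact congrFun (LinearMap.mem_ker.1 hα) ⟨d, hd⟩

lemma coeff_X_pow_mul_iterate_derivative (w : K[X]) (k d : ℕ) :
    (X ^ k * derivative^[k] w).coeff d = (descPochhammer K k).eval (d : K) * w.coeff d := by
  rw [descPochhammer_eval_eq_descFactorial]
  rcases lt_or_ge d k with hdk | hkd
  · rw [coeff_X_pow_mul', if_neg hdk.not_ge, Nat.descFactorial_of_lt hdk]
    simp
  · rw [coeff_X_pow_mul', if_pos hkd, coeff_iterate_derivative, Nat.sub_add_cancel hkd,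
      nsmul_eq_mul]

-- `a` is the indicial polynomial at infinity of the differential operator `∑ k, c k * D ^ k`; the
-- factor `X ^ r` keeps all exponents natural.
lemma exists_indicial_polynomial {r : ℕ} {c : Fin r → K[X]} (hc : c ≠ 0) :
    ∃ (e : ℕ) (a : K[X]), a ≠ 0 ∧ a.degree < r ∧
      ∀ w : K[X], (X ^ r * ∑ k, c k * derivative^[k] w).coeff (e + w.natDegree) =
        a.eval (w.natDegree : K) * w.leadingCoeff := by
  let q (k : Fin r) : K[X] := X ^ (r - k : ℕ) * c k
  obtain ⟨k₀, hk₀⟩ := Function.ne_iff.1 hc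
  obtain ⟨l, -, hmax⟩ := univ.exists_max_image (fun k ↦ (q k).degree) ⟨k₀, mem_univ _⟩
  have hq (k : Fin r) : (q k).natDegree ≤ (q l).natDegree :=
    natDegree_le_natDegree (hmax k (mem_univ k))
  have hql : q l ≠ 0 := by
    have hq₀ : q k₀ ≠ 0 := mul_ne_zero (pow_ne_zero _ X_ne_zero) hk₀
    exact fun h ↦ hq₀ (degree_eq_bot.1 (le_bot_iff.1 (by simpa [h] using hmax k₀ (mem_univ k₀))))
  refine ⟨(q l).natDegree, ∑ k, (q k).coeff (q l).natDegree • descPochhammer K k, fun h ↦ ?_, ?_,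
    fun w ↦ ?_⟩
  · have hli := linearIndependent_descPochhammer (K := K).comp _ (Fin.val_injective (n := r))
    exact hql (leadingCoeff_eq_zero.1 (Fintype.linearIndependent_iff.1 hli _ h l))
  · refine (degree_lt_iff_coeff_zero _ _).2 fun d hd ↦ ?_
    rw [finsetSum_coeff]
    refine sum_eq_zero fun k _ ↦ ?_
    rw [coeff_smul, coeff_eq_zero_of_natDegree_lt (p := descPochhammer K k), smul_zero]
    exact (descPochhammer_natDegree K k).trans_lt (k.2.trans_le hd)
  · rw [mul_sum, finsetSum_coeff, eval_finsetSum, sum_mul]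
    refine sum_congr rfl fun k _ ↦ ?_
    have hsplit : X ^ r * (c k * derivative^[k] w) = q k * (X ^ (k : ℕ) * derivative^[k] w) := by
      rw [← pow_sub_mul_pow X k.2.le]
      ring
    have hw : (X ^ (k : ℕ) * derivative^[k] w).natDegree ≤ w.natDegree := by
      refine natDegree_le_iff_coeff_eq_zero.2 fun d hd ↦ ?_
      rw [coeff_X_pow_mul_iterate_derivative, coeff_eq_zero_of_natDegree_lt hd, mul_zero]
    rw [hsplit, coeff_mul_add_eq_of_natDegree_le (hq k) hw, coeff_X_pow_mul_iterate_derivative,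
      eval_smul, smul_eq_mul, mul_assoc, leadingCoeff]

-- The indicial polynomial would vanish at all of the at least `r` degrees attained in the span.
lemma eq_zero_of_sum_mul_iterate_derivative_eq_zero {r N : ℕ} (hN : (N.factorial : K) ≠ 0)
    {v : Fin r → K[X]} (hv : LinearIndependent K v) (hdeg : ∀ b, (v b).natDegree ≤ N)
    {c : Fin r → K[X]} (hc : ∀ b, ∑ k, c k * derivative^[k] (v b) = 0) : c = 0 := by
  classical
  by_contra hc0
  obtain ⟨e, a, ha0, hadeg, ha⟩ := exists_indicial_polynomial hc0
  let Z : Finset ℕ := {d ∈ Iic N | a.eval (d : K) = 0}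
  have hZ : #Z < r := by
    have hinj : Set.InjOn (Nat.cast : ℕ → K) Z :=
      (natCast_injOn_Iic hN).mono fun d hd ↦ by simpa using (mem_filter.1 hd).1
    rw [← card_image_of_injOn hinj]
    refine (card_le_degree_of_subset_roots ?_).trans_lt ((natDegree_lt_iff_degree_lt ha0).2 hadeg)
    intro z hz
    rw [mem_val] at hz
    obtain ⟨d, hd, rfl⟩ := mem_image.1 hz
    exact (mem_roots ha0).2 (mem_filter.1 hd).2
  obtain ⟨w, hw, hw0, hwZ⟩ := exists_ne_zero_mem_span_coeff_eq_zero hv hZ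
  have hwdeg : w.natDegree ≤ N := by
    have hspan : Submodule.span K (Set.range v) ≤ degreeLE K N :=
      Submodule.span_le.2 (Set.range_subset_iff.2 fun b ↦
        mem_degreeLE.2 (natDegree_le_iff_degree_le.1 (hdeg b)))
    exact natDegree_le_iff_degree_le.2 (mem_degreeLE.1 (hspan hw))
  have hwc : ∑ k, c k * derivative^[k] w = 0 := by
    let Λ : K[X] →ₗ[K] K[X] := ∑ k, LinearMap.mulLeft K (c k) ∘ₗ derivative ^ (k : ℕ)
    have hΛ (P : K[X]) : Λ P = ∑ k, c k * derivative^[k] P := by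
      simp [Λ, Module.End.pow_apply]
    have hspan : Submodule.span K (Set.range v) ≤ LinearMap.ker Λ :=
      Submodule.span_le.2 (Set.range_subset_iff.2 fun b ↦ (hΛ _).trans (hc b))
    exact (hΛ w).symm.trans (hspan hw)
  have hroot : a.eval (w.natDegree : K) * w.leadingCoeff = 0 := by
    rw [← ha, hwc, mul_zero, coeff_zero]
  have hroot' := (mul_eq_zero.1 hroot).resolve_right (leadingCoeff_ne_zero.2 hw0)
  exact leadingCoeff_ne_zero.2 hw0 (hwZ _ (mem_filter.2 ⟨mem_Iic.2 hwdeg, hroot'⟩))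

theorem det_wronskianMatrix_ne_zero {r N : ℕ} (hN : (N.factorial : K) ≠ 0)
    {v : Fin r → K[X]} (hv : LinearIndependent K v) (hdeg : ∀ b, (v b).natDegree ≤ N) :
    (wronskianMatrix v).det ≠ 0 := by
  intro h
  obtain ⟨c, hc0, hc⟩ := Matrix.exists_vecMul_eq_zero_iff.2 h
  exact hc0 (eq_zero_of_sum_mul_iterate_derivative_eq_zero hN hv hdeg (congrFun hc))

end Wronskian

section OrderOfVanishing

lemma dvd_det_mul_of_dvd_mulVec {R n : Type*} [CommRing R] [Fintype n] [DecidableEq n]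
    {A : Matrix n n R} {v : n → R} {d : R} (h : ∀ i, d ∣ A.mulVec v i) (j : n) :
    d ∣ A.det * v j := by
  have hadj : A.adjugate.mulVec (A.mulVec v) = A.det • v := by
    rw [Matrix.mulVec_mulVec, Matrix.adjugate_mul, Matrix.smul_mulVec, Matrix.one_mulVec]
  rw [← smul_eq_mul, ← Pi.smul_apply, ← hadj]
  exact dvd_sum fun k _ ↦ (h k).mul_left _

lemma natDegree_det_le_sum {R n : Type*} [CommRing R] [Fintype n] [DecidableEq n]
    {A : Matrix n n R[X]} {d : n → ℕ} (h : ∀ i j, (A i j).natDegree ≤ d i) :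
    A.det.natDegree ≤ ∑ i, d i := by
  rw [Matrix.det_apply']
  refine natDegree_sum_le_of_forall_le _ _ fun σ _ ↦ natDegree_mul_le.trans ?_
  rw [natDegree_intCast, zero_add, ← Equiv.sum_comp σ d]
  exact (natDegree_prod_le _ _).trans (sum_le_sum fun j _ ↦ h _ j)

variable {K : Type*} [Field K]

lemma det_twistedDerivative_ne_zero {r N : ℕ} (hN : (N.factorial : K) ≠ 0) {F : K[X]}
    {P G H : Fin r → K[X]} (hF : F ≠ 0) (hG : ∀ b, F * derivative (G b) = H b * G b)
    (hdeg : ∀ b, (P b * G b).natDegree ≤ N) (hPG : LinearIndependent K fun b ↦ P b * G b) :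
    (Matrix.of fun k b : Fin r ↦ twistedDerivative F (H b) k (P b)).det ≠ 0 := by
  have hW : Matrix.of (fun k b : Fin r ↦ twistedDerivative F (H b) k (P b)) * Matrix.diagonal G =
      Matrix.diagonal (fun k : Fin r ↦ F ^ (k : ℕ)) * wronskianMatrix fun b ↦ P b * G b := by
    ext1 k b
    rw [Matrix.mul_diagonal, Matrix.diagonal_mul]
    exact twistedDerivative_mul (hG b) k (P b)
  refine left_ne_zero_of_mul (b := (Matrix.diagonal G).det) ?_
  rw [← Matrix.det_mul, hW, Matrix.det_mul, Matrix.det_diagonal]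
  exact mul_ne_zero (prod_ne_zero_iff.2 fun k _ ↦ pow_ne_zero _ hF)
    (det_wronskianMatrix_ne_zero hN hPG hdeg)

lemma pow_X_sub_C_dvd_sum_twistedDerivative_mul {ι : Type*} {S : Finset ι} {t : ℕ} {F : K[X]}
    {P G H : ι → K[X]} {x : K} (hG : ∀ b ∈ S, F * derivative (G b) = H b * G b) (hFx : F.IsRoot x)
    (hdvd : (X - C x) ^ t ∣ ∑ b ∈ S, P b * G b) (k : ℕ) :
    (X - C x) ^ t ∣ ∑ b ∈ S, twistedDerivative F (H b) k (P b) * G b := by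
  have hsum : ∑ b ∈ S, twistedDerivative F (H b) k (P b) * G b =
      F ^ k * derivative^[k] (∑ b ∈ S, P b * G b) := by
    rw [iterate_derivative_sum, mul_sum]
    exact sum_congr rfl fun b hb ↦ twistedDerivative_mul (hG b hb) k (P b)
  rw [hsum]
  refine (pow_dvd_pow _ (show t ≤ k + (t - k) by lia)).trans ?_
  rw [pow_add]
  exact mul_dvd_mul (pow_dvd_pow_of_dvd (dvd_iff_isRoot.2 hFx) k)
    (pow_sub_dvd_iterate_derivative_of_pow_dvd k hdvd)

-- By Cramer's rule, a power of `X - C x` dividing the sum divides the determinant of the twisted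
-- derivatives, whose degree is bounded independently of the `G b`.
lemma le_sum_range_of_pow_dvd_sum_fin {r a s t N : ℕ} [NeZero r] (hN : (N.factorial : K) ≠ 0)
    {F : K[X]} {P G H : Fin r → K[X]} {x : K} (hF : F ≠ 0)
    (hG : ∀ b, F * derivative (G b) = H b * G b) (hFs : F.natDegree ≤ s)
    (hHs : ∀ b, (H b).natDegree ≤ s) (hPa : ∀ b, (P b).natDegree ≤ a)
    (hdeg : ∀ b, (P b * G b).natDegree ≤ N) (hPG : LinearIndependent K fun b ↦ P b * G b)
    (hFx : F.IsRoot x) (hGx : ∀ b, ¬ (G b).IsRoot x) (hdvd : (X - C x) ^ t ∣ ∑ b, P b * G b) :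
    t ≤ ∑ k ∈ range r, (a + k * s) := by
  let R : Matrix (Fin r) (Fin r) K[X] := .of fun k b ↦ twistedDerivative F (H b) k (P b)
  have hdet : R.det ≠ 0 := det_twistedDerivative_ne_zero hN hF hG hdeg hPG
  have hmulVec (k : Fin r) : R.mulVec G k = ∑ b, twistedDerivative F (H b) k (P b) * G b := rfl
  have hdvd_mulVec (k : Fin r) : (X - C x) ^ t ∣ R.mulVec G k := by
    rw [hmulVec]
    exact pow_X_sub_C_dvd_sum_twistedDerivative_mul (fun b _ ↦ hG b) hFx hdvd k
  have hdvd_mul : (X - C x) ^ t ∣ R.det * G 0 := dvd_det_mul_of_dvd_mulVec hdvd_mulVec 0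
  have hcop : IsCoprime ((X - C x) ^ t) (G 0) :=
    IsCoprime.pow_left ((irreducible_X_sub_C x).coprime_iff_not_dvd.2
      (dvd_iff_isRoot.not.2 (hGx 0)))
  have hdvd_det := natDegree_le_of_dvd (hcop.dvd_of_dvd_mul_right hdvd_mul) hdet
  rw [natDegree_pow, natDegree_X_sub_C, mul_one] at hdvd_det
  rw [← Fin.sum_univ_eq_sum_range fun k ↦ a + k * s]
  exact hdvd_det.trans (natDegree_det_le_sum fun k b ↦
    (natDegree_twistedDerivative_le hFs (hHs b) k (P b)).trans (Nat.add_le_add_right (hPa b) _))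

theorem le_sum_range_card_of_pow_dvd_sum {ι : Type*} {S : Finset ι} {a s t N : ℕ}
    (hN : (N.factorial : K) ≠ 0) (hS : S.Nonempty)
    {F : K[X]} {P G H : ι → K[X]} {x : K} (hF : F ≠ 0)
    (hG : ∀ b ∈ S, F * derivative (G b) = H b * G b) (hFs : F.natDegree ≤ s)
    (hHs : ∀ b ∈ S, (H b).natDegree ≤ s) (hPa : ∀ b ∈ S, (P b).natDegree ≤ a)
    (hdeg : ∀ b ∈ S, (P b * G b).natDegree ≤ N) (hPG : LinearIndepOn K (fun b ↦ P b * G b) S)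
    (hFx : F.IsRoot x) (hGx : ∀ b ∈ S, ¬ (G b).IsRoot x)
    (hdvd : (X - C x) ^ t ∣ ∑ b ∈ S, P b * G b) :
    t ≤ ∑ k ∈ range #S, (a + k * s) := by
  have : NeZero #S := ⟨hS.card_ne_zero⟩
  let ε : Fin #S ≃ S := S.equivFin.symm
  rw [← sum_coe_sort, ← Equiv.sum_comp ε] at hdvd
  exact le_sum_range_of_pow_dvd_sum_fin hN (P := fun i ↦ P (ε i)) hF (fun i ↦ hG _ (ε i).2) hFs
    (fun i ↦ hHs _ (ε i).2) (fun i ↦ hPa _ (ε i).2) (fun i ↦ hdeg _ (ε i).2)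
    (hPG.linearIndependent.comp ε ε.injective) hFx (fun i ↦ hGx _ (ε i).2) hdvd

end OrderOfVanishing

section Independence

lemma linearIndepOn_of_forall_sum_smul_ne_zero {K M ι : Type*} [Field K] [AddCommGroup M]
    [Module K M] {v : ι → M} {S : Finset ι}
    (h : ∀ T ⊆ S, T.Nonempty → ∀ α : ι → K, (∀ b ∈ T, α b ≠ 0) → ∑ b ∈ T, α b • v b ≠ 0) :
    LinearIndepOn K v S := by
  classical
  rw [linearIndepOn_finset_iff]
  intro α hα b hb
  by_contra hαb
  refine h {b ∈ S | α b ≠ 0} (filter_subset _ _) ⟨b, mem_filter.2 ⟨hb, hαb⟩⟩ α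
    (fun b hb ↦ (mem_filter.1 hb).2) ?_
  rw [sum_filter_of_ne fun b _ hb ↦ left_ne_zero_of_smul hb, hα]

lemma pow_dvd_sum_filter_of_sum_mul_pow_eq_zero {R ι : Type*} [CommRing R] [IsDomain R] {q : R}
    (hq : q ≠ 0) {S : Finset ι} {u : ι → R} {e : ι → ℕ} {t c : ℕ} (hc : ∀ b ∈ S, c ≤ e b)
    (hsum : ∑ b ∈ S, u b * q ^ (t * e b) = 0) : q ^ t ∣ ∑ b ∈ S with e b = c, u b := by
  have hlow : ∑ b ∈ S with e b = c, u b * q ^ (t * e b) =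
      q ^ (t * c) * ∑ b ∈ S with e b = c, u b := by
    rw [mul_sum]
    exact sum_congr rfl fun b hb ↦ by rw [(mem_filter.1 hb).2, mul_comm]
  have hhigh : q ^ (t * c) * q ^ t ∣ ∑ b ∈ S with ¬e b = c, u b * q ^ (t * e b) := by
    refine dvd_sum fun b hb ↦ Dvd.dvd.mul_left ?_ _
    obtain ⟨hbS, hbc⟩ := mem_filter.1 hb
    rw [← pow_add, ← Nat.mul_succ]
    exact pow_dvd_pow q (Nat.mul_le_mul_left t (lt_of_le_of_ne' (hc b hbS) hbc))
  rw [← sum_filter_add_sum_filter_not S (e · = c), hlow] at hsum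
  rw [← mul_dvd_mul_iff_left (pow_ne_zero (t * c) hq), eq_neg_of_add_eq_zero_left hsum]
  exact hhigh.neg_right

variable {K ι : Type*} [Field K] [Fintype ι] {f : ι → K[X]} {x : ι → K}

lemma natDegree_mul_prod_pow_le {a t : ℕ} {P : K[X]} (hP : P.natDegree ≤ a) (f : ι → K[X])
    (s : Finset ι) (b : ι → ℕ) :
    (P * ∏ i ∈ s, f i ^ (t * b i)).natDegree ≤ a + t * ∑ i, (f i).natDegree * b i := by
  refine natDegree_mul_le_of_le hP ((natDegree_prod_le _ _).trans ?_)
  rw [mul_sum]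
  refine (sum_le_sum fun i _ ↦ ?_).trans
    (sum_le_sum_of_subset (f := fun i ↦ t * ((f i).natDegree * b i)) (subset_univ s))
  rw [natDegree_pow]
  lia

lemma le_sum_range_card_of_pow_dvd_sum_mul_prod_erase [DecidableEq ι] (hf : ∀ i, f i ≠ 0)
    (hx : ∀ i j, (f j).IsRoot (x i) ↔ j = i) {a t N : ℕ} (hN : (N.factorial : K) ≠ 0)
    {S : Finset (ι → ℕ)} (hS : S.Nonempty) {P : (ι → ℕ) → K[X]}
    (hPa : ∀ b ∈ S, (P b).natDegree ≤ a)
    (hdeg : ∀ b ∈ S, a + t * ∑ i, (f i).natDegree * b i ≤ N) (i : ι)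
    (hli : LinearIndepOn K (fun b ↦ P b * ∏ j ∈ univ.erase i, f j ^ (t * b j)) S)
    (hdvd : f i ^ t ∣ ∑ b ∈ S, P b * ∏ j ∈ univ.erase i, f j ^ (t * b j)) :
    t ≤ ∑ k ∈ range #S, (a + k * ∑ i, (f i).natDegree) := by
  refine le_sum_range_card_of_pow_dvd_sum hN hS (F := ∏ i, f i)
    (prod_ne_zero_iff.2 fun i _ ↦ hf i)
    (fun b _ ↦ prod_mul_derivative_prod_pow f (univ.erase i) fun j ↦ t * b j)
    (natDegree_prod_le _ _) (fun b _ ↦ natDegree_logDerivNumerator_le _ _ _) hPa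
    (fun b hb ↦ (natDegree_mul_prod_pow_le (hPa b hb) f _ b).trans (hdeg b hb)) hli
    (x := x i) ?_ (fun b _ ↦ ?_)
    ((pow_dvd_pow_of_dvd (dvd_iff_isRoot.2 ((hx i i).2 rfl)) t).trans hdvd)
  · exact (isRoot_prod _ _ _).2 ⟨i, mem_univ i, (hx i i).2 rfl⟩
  · rw [isRoot_prod]
    rintro ⟨j, hj, hroot⟩
    rw [IsRoot.def, eval_pow] at hroot
    exact ne_of_mem_erase hj ((hx i j).1 (eq_zero_of_pow_eq_zero hroot))

theorem sum_mul_prod_pow_ne_zero (hf : ∀ i, f i ≠ 0) (hx : ∀ i j, (f j).IsRoot (x i) ↔ j = i)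
    {a t N : ℕ} (hN : (N.factorial : K) ≠ 0) {S : Finset (ι → ℕ)} (hS : S.Nonempty)
    {P : (ι → ℕ) → K[X]} (hP : ∀ b ∈ S, P b ≠ 0) (hPa : ∀ b ∈ S, (P b).natDegree ≤ a)
    (hdeg : ∀ b ∈ S, a + t * ∑ i, (f i).natDegree * b i ≤ N)
    (ht : ∑ k ∈ range #S, (a + k * ∑ i, (f i).natDegree) < t) :
    ∑ b ∈ S, P b * ∏ i, f i ^ (t * b i) ≠ 0 := by
  classical
  induction S using Finset.strongInduction generalizing P with | _ S ih =>
  intro hsum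
  rcases hS.exists_eq_singleton_or_nontrivial with ⟨b, rfl⟩ | hSnt
  · rw [sum_singleton] at hsum
    exact mul_ne_zero (hP b (mem_singleton_self b))
      (prod_ne_zero_iff.2 fun i _ ↦ pow_ne_zero _ (hf i)) hsum
  obtain ⟨b₁, hb₁, b₂, hb₂, hne⟩ := hSnt
  obtain ⟨i, hi⟩ := Function.ne_iff.1 hne
  obtain ⟨b₀, hb₀, hmin⟩ := S.exists_min_image (fun b : ι → ℕ ↦ b i) hS
  let T : Finset (ι → ℕ) := {b ∈ S | b i = b₀ i}
  have hTS : T ⊂ S := by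
    refine filter_ssubset.2 ?_
    by_contra! h
    exact hi ((h b₁ hb₁).trans (h b₂ hb₂).symm)
  have hlt {U : Finset (ι → ℕ)} (hU : U ⊆ S) :
      ∑ k ∈ range #U, (a + k * ∑ i, (f i).natDegree) < t :=
    (sum_le_sum_of_subset (range_mono (card_le_card hU))).trans_lt ht
  have hprod (b : ι → ℕ) : P b * ∏ j, f j ^ (t * b j) =
      (P b * ∏ j ∈ univ.erase i, f j ^ (t * b j)) * f i ^ (t * b i) := by
    rw [mul_assoc, prod_erase_mul _ _ (mem_univ i)]
  have hdvd : f i ^ t ∣ ∑ b ∈ T, P b * ∏ j ∈ univ.erase i, f j ^ (t * b j) := by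
    refine pow_dvd_sum_filter_of_sum_mul_pow_eq_zero (hf i) (e := fun b : ι → ℕ ↦ b i) hmin ?_
    rw [← hsum]
    exact sum_congr rfl fun b _ ↦ (hprod b).symm
  have hli : LinearIndepOn K (fun b ↦ P b * ∏ j ∈ univ.erase i, f j ^ (t * b j)) T := by
    refine linearIndepOn_of_forall_sum_smul_ne_zero fun U hUT hU α hα h ↦ ?_
    have hUS := hUT.trans hTS.subset
    refine ih U (hUT.trans_ssubset hTS) hU (P := fun b ↦ α b • P b)
      (fun b hb ↦ smul_ne_zero (hα b hb) (hP b (hUS hb)))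
      (fun b hb ↦ (natDegree_smul_le _ _).trans (hPa b (hUS hb))) (fun b hb ↦ hdeg b (hUS hb))
      (hlt hUS) ?_
    rw [← zero_mul (f i ^ (t * b₀ i)), ← h, sum_mul]
    refine sum_congr rfl fun b hb ↦ ?_
    rw [smul_mul_assoc, hprod, (mem_filter.1 (hUT hb)).2, smul_mul_assoc]
  exact (hlt hTS.subset).not_ge (le_sum_range_card_of_pow_dvd_sum_mul_prod_erase hf hx hN
    ⟨b₀, mem_filter.2 ⟨hb₀, rfl⟩⟩ (fun b hb ↦ hPa b (hTS.subset hb))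
    (fun b hb ↦ hdeg b (hTS.subset hb)) i hli hdvd)

end Independence

section Stepanov

variable {K ι : Type*} [Field K]

lemma mem_degreeLT_succ_iff {P : K[X]} {n : ℕ} : P ∈ degreeLT K (n + 1) ↔ P.natDegree ≤ n := by
  rw [degreeLT_succ_eq_degreeLE, mem_degreeLE, natDegree_le_iff_degree_le]

lemma exists_ne_zero_forall_sum_eq_zero {S : Finset ι} {D a : ℕ} {d : ℕ → ℕ}
    {L : ℕ → ι → K[X] →ₗ[K] K[X]}
    (hL : ∀ k b P, P.natDegree ≤ a → (L k b P).natDegree ≤ d k)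
    (hcard : ∑ k ∈ range D, (d k + 1) < #S * (a + 1)) :
    ∃ P : ι → K[X], (∃ b ∈ S, P b ≠ 0) ∧ (∀ b, (P b).natDegree ≤ a) ∧
      ∀ k < D, ∑ b ∈ S, L k b (P b) = 0 := by
  classical
  have hfinrank (n : ℕ) : Module.finrank K (degreeLT K n) = n := by
    simp [(degreeLTEquiv K n).finrank_eq]
  have (n : ℕ) : FiniteDimensional K (degreeLT K n) := (degreeLTEquiv K n).symm.finiteDimensional
  let Φ : (S → degreeLT K (a + 1)) →ₗ[K] (k : Fin D) → degreeLT K (d k + 1) :=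
    LinearMap.pi fun k ↦ ∑ b : S,
      (L k b).restrict (fun P hP ↦ mem_degreeLT_succ_iff.2 (hL k b P (mem_degreeLT_succ_iff.1 hP)))
        ∘ₗ LinearMap.proj b
  have hΦ (P) (k : Fin D) : (Φ P k : K[X]) = ∑ b : S, L k b (P b) := by
    simp [Φ, LinearMap.sum_apply]
  have hker : LinearMap.ker Φ ≠ ⊥ := by
    refine LinearMap.ker_ne_bot_of_finrank_lt ?_
    simpa [Module.finrank_pi_fintype, hfinrank, Fin.sum_univ_eq_sum_range fun k ↦ d k + 1]
      using hcard
  obtain ⟨P, hP, hP0⟩ := Submodule.exists_mem_ne_zero_of_ne_bot hker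
  obtain ⟨b, hb⟩ := Function.ne_iff.1 hP0
  let Q (b : ι) : K[X] := if hb : b ∈ S then P ⟨b, hb⟩ else 0
  have hQ (b : S) : Q b = P b := dif_pos b.2
  refine ⟨Q, ⟨b, b.2, fun h ↦ hb (Subtype.ext ((hQ b).symm.trans h))⟩, fun b ↦ ?_, fun k hk ↦ ?_⟩
  · by_cases hb : b ∈ S
    · exact hQ ⟨b, hb⟩ ▸ mem_degreeLT_succ_iff.1 (P _).2
    · simp [Q, hb]
  · rw [← sum_coe_sort]
    simp only [hQ]
    rw [← hΦ P ⟨k, hk⟩, LinearMap.mem_ker.1 hP]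
    rfl

lemma finite_and_ncard_mul_le_natDegree {p : K[X]} (hp : p ≠ 0) {D : ℕ} (hD : 0 < D) {A : Set K}
    (hA : ∀ y ∈ A, D ≤ p.rootMultiplicity y) : A.Finite ∧ A.ncard * D ≤ p.natDegree := by
  classical
  have hsub : A ⊆ p.roots.toFinset := fun y hy ↦ by
    simpa [hp] using (rootMultiplicity_pos hp).1 (hD.trans_le (hA y hy))
  have hfin : A.Finite := p.roots.toFinset.finite_toSet.subset hsub
  refine ⟨hfin, ?_⟩
  calc A.ncard * D = ∑ _y ∈ hfin.toFinset, D := by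
        rw [sum_const, smul_eq_mul, Set.ncard_eq_toFinset_card A hfin]
    _ ≤ ∑ y ∈ hfin.toFinset, p.roots.count y :=
        sum_le_sum fun y hy ↦ (hA y (hfin.mem_toFinset.1 hy)).trans_eq (count_roots p).symm
    _ ≤ ∑ y ∈ p.roots.toFinset, p.roots.count y :=
        sum_le_sum_of_subset (hfin.toFinset_subset.2 hsub)
    _ = p.roots.card := Multiset.toFinset_sum_count_eq _
    _ ≤ p.natDegree := p.card_roots'

lemma lt_rootMultiplicity_of_sum_twistedDerivative_eq_zero {S : Finset ι} {F : K[X]}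
    {P G H : ι → K[X]} {y : K} {E : ℕ} (hE : (E.factorial : K) ≠ 0)
    (hG : ∀ b ∈ S, F * derivative (G b) = H b * G b) (hFy : ¬ F.IsRoot y)
    (h0 : ∑ b ∈ S, P b * G b ≠ 0)
    (hsum : ∀ k ≤ E, ∑ b ∈ S, (twistedDerivative F (H b) k (P b)).eval y * (G b).eval y = 0) :
    E < (∑ b ∈ S, P b * G b).rootMultiplicity y := by
  refine lt_rootMultiplicity_of_isRoot_iterate_derivative_of_mem_nonZeroDivisors h0
    (fun k hk ↦ ?_) (mem_nonZeroDivisors_of_ne_zero hE)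
  have hroot : (F ^ k * derivative^[k] (∑ b ∈ S, P b * G b)).eval y = 0 := by
    rw [iterate_derivative_sum, mul_sum, eval_finsetSum, ← hsum k hk]
    exact sum_congr rfl fun b hb ↦ by rw [← twistedDerivative_mul (hG b hb), eval_mul]
  rw [eval_mul, eval_pow] at hroot
  exact (mul_eq_zero.1 hroot).resolve_left (pow_ne_zero k hFy)

variable [Fintype ι] {f : ι → K[X]} {x c : ι → K}

lemma exists_ne_zero_forall_lt_rootMultiplicity (hf : ∀ i, f i ≠ 0)
    (hx : ∀ i j, (f j).IsRoot (x i) ↔ j = i) (hc : ∀ i, c i ≠ 0)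
    {a t E N : ℕ} (hN : (N.factorial : K) ≠ 0) (hE : E ≤ N) {S : Finset (ι → ℕ)}
    (hdeg : ∀ b ∈ S, a + t * ∑ i, (f i).natDegree * b i ≤ N)
    (hcard : ∑ k ∈ range (E + 1), (a + k * ∑ i, (f i).natDegree + 1) < #S * (a + 1))
    (ht : ∑ k ∈ range #S, (a + k * ∑ i, (f i).natDegree) < t) :
    ∃ Ψ : K[X], Ψ ≠ 0 ∧ Ψ.natDegree ≤ N ∧
      ∀ y, (∀ i, (f i).eval y ^ t = c i) → E < Ψ.rootMultiplicity y := by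
  classical
  let F : K[X] := ∏ i, f i
  let G (b : ι → ℕ) : K[X] := ∏ i, f i ^ (t * b i)
  let H (b : ι → ℕ) : K[X] := logDerivNumerator f univ fun i ↦ t * b i
  have hG (b : ι → ℕ) : F * derivative (G b) = H b * G b := prod_mul_derivative_prod_pow f univ _
  obtain ⟨P, ⟨b₀, hb₀, hPb₀⟩, hPa, hP⟩ := exists_ne_zero_forall_sum_eq_zero
    (L := fun k b ↦ (∏ i, c i ^ b i) • twistedDerivative F (H b) k)
    (fun k b P hP ↦ (natDegree_smul_le _ _).trans ((natDegree_twistedDerivative_le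
      (natDegree_prod_le _ _) (natDegree_logDerivNumerator_le _ _ _) k P).trans
        (Nat.add_le_add_right hP _))) hcard
  have hΨ0 : ∑ b ∈ S, P b * G b ≠ 0 := by
    rw [← sum_filter_of_ne fun b _ ↦ left_ne_zero_of_mul]
    exact sum_mul_prod_pow_ne_zero hf hx hN ⟨b₀, mem_filter.2 ⟨hb₀, hPb₀⟩⟩
      (fun b hb ↦ (mem_filter.1 hb).2) (fun b _ ↦ hPa b)
      (fun b hb ↦ hdeg b (mem_filter.1 hb).1)
      ((sum_le_sum_of_subset (range_mono (card_filter_le _ _))).trans_lt ht)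
  refine ⟨∑ b ∈ S, P b * G b, hΨ0, natDegree_sum_le_of_forall_le _ _ fun b hb ↦
    (natDegree_mul_prod_pow_le (hPa b) f univ b).trans (hdeg b hb), fun y hy ↦ ?_⟩
  have hFy : ¬ F.IsRoot y := by
    rw [isRoot_prod]
    rintro ⟨i, -, hi⟩
    exact hc i (by rw [← hy i, hi, zero_pow ht.ne_bot])
  have hGy (b : ι → ℕ) : (G b).eval y = ∏ i, c i ^ b i := by
    rw [eval_prod]
    exact prod_congr rfl fun i _ ↦ by rw [eval_pow, pow_mul, hy i]
  have hE0 : (E.factorial : K) ≠ 0 :=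
    ne_zero_of_dvd_ne_zero hN (map_dvd (Nat.castRingHom K) (Nat.factorial_dvd_factorial hE))
  refine lt_rootMultiplicity_of_sum_twistedDerivative_eq_zero hE0 (fun b _ ↦ hG b) hFy hΨ0
    fun k hk ↦ ?_
  have hPk := congrArg (eval y) (hP k (Nat.lt_succ_of_le hk))
  rw [eval_finsetSum, eval_zero] at hPk
  rw [← hPk]
  refine sum_congr rfl fun b _ ↦ ?_
  rw [hGy, mul_comm, LinearMap.smul_apply, eval_smul, smul_eq_mul]

theorem finite_and_ncard_mul_le_of_eval_pow_eq (hf : ∀ i, f i ≠ 0)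
    (hx : ∀ i j, (f j).IsRoot (x i) ↔ j = i) (hc : ∀ i, c i ≠ 0)
    {s t E N : ℕ} (hs : ∑ i, (f i).natDegree = s) (hN : (N.factorial : K) ≠ 0) (hE : E ≤ N)
    (ht : s * (E + 1) * (4 * E + 1) < t) {S : Finset (ι → ℕ)} (hS : 2 * (E + 1) ≤ #S)
    (hdeg : ∀ b ∈ S, s * E + t * ∑ i, (f i).natDegree * b i ≤ N) :
    {y | ∀ i, (f i).eval y ^ t = c i}.Finite ∧
      {y | ∀ i, (f i).eval y ^ t = c i}.ncard * (E + 1) ≤ N := by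
  obtain ⟨T, hTS, hT⟩ := exists_subset_card_eq hS
  have hsum_range (D : ℕ) :
      2 * ∑ k ∈ range D, (s * E + k * s) + s * D = 2 * (s * E * D) + s * D ^ 2 := by
    induction D with
    | zero => simp
    | succ D ih => rw [sum_range_succ]; linear_combination ih
  obtain ⟨Ψ, hΨ0, hΨdeg, hΨ⟩ := exists_ne_zero_forall_lt_rootMultiplicity (a := s * E) hf hx hc
    hN hE (fun b hb ↦ hdeg b (hTS hb))
    (by
      rw [hT, hs, sum_add_distrib, sum_const, card_range, smul_eq_mul]
      nlinarith [hsum_range (E + 1), Nat.zero_le (s * E * (E + 1))])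
    (by
      rw [hT, hs]
      nlinarith [hsum_range (2 * (E + 1))])
  exact (finite_and_ncard_mul_le_natDegree hΨ0 E.succ_pos hΨ).imp_right fun h ↦ h.trans hΨdeg

end Stepanov

section Parameters

open Real

variable {ι : Type*} [Fintype ι] [DecidableEq ι]

lemma prod_le_card_piFinset_range_floor {β : ι → ℝ}
    (hβ : ∀ i, 0 ≤ β i) : ∏ i, β i ≤ #(Fintype.piFinset fun i ↦ range (⌊β i⌋₊ + 1)) := by
  rw [Fintype.card_piFinset, Nat.cast_prod]
  refine prod_le_prod (fun i _ ↦ hβ i) fun i _ ↦ ?_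
  rw [card_range, Nat.cast_add_one]
  exact (Nat.lt_floor_add_one _).le

lemma sum_mul_le_of_mem_piFinset_range_floor {d b : ι → ℕ} (hd : ∀ i, 0 < d i) {B : ℝ}
    (hB : 0 ≤ B) (hb : b ∈ Fintype.piFinset fun i ↦ range (⌊B / d i⌋₊ + 1)) :
    ∑ i, (d i * b i : ℝ) ≤ Fintype.card ι * B := by
  rw [← nsmul_eq_mul, ← card_univ]
  refine sum_le_card_nsmul _ _ _ fun i _ ↦ ?_
  have hbi : b i ≤ ⌊B / d i⌋₊ := Nat.lt_succ_iff.1 (mem_range.1 (Fintype.mem_piFinset.1 hb i))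
  rw [← le_div_iff₀' (mod_cast hd i)]
  exact (Nat.le_floor_iff (by positivity)).1 hbi

lemma exists_stepanov_order {s t : ℕ} (hs : 2 ≤ s) (hst : s ≤ √t) (ht : 4 < √t) :
    ∃ E : ℕ, s * (E + 1) * (4 * E + 1) < t ∧ 2 * (E + 1) ≤ √t ∧ √t < 4 * s * (E + 1) := by
  have hs' : (2 : ℝ) ≤ s := mod_cast hs
  obtain ⟨E, hlow, hhigh⟩ : ∃ E : ℕ, E ≤ √t / (4 * s) ∧ √t / (4 * s) < E + 1 :=
    ⟨⌊√t / (4 * s)⌋₊, Nat.floor_le (by positivity), Nat.lt_floor_add_one _⟩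
  rw [le_div_iff₀' (by positivity)] at hlow
  rw [div_lt_iff₀' (by positivity)] at hhigh
  have hE : 8 * E ≤ √t := by nlinarith [E.cast_nonneg (α := ℝ)]
  refine ⟨E, ?_, by linarith, hhigh⟩
  have hsE : 4 * s * E * E ≤ √t * E := by gcongr
  have : (s : ℝ) * (E + 1) * (4 * E + 1) < t := by
    nlinarith [mul_self_sqrt (Nat.cast_nonneg' (α := ℝ) t)]
  exact_mod_cast this

lemma two_pow_mul_pow_lt_sqrt {n d : ℕ} {t : ℝ} (h : 2 ^ (2 * n) * (d : ℝ) ^ (4 * n) < t) :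
    2 ^ n * (d : ℝ) ^ (2 * n) < √t := by
  refine lt_sqrt_of_sq_lt (h.trans_eq' ?_)
  ring

lemma four_lt_sqrt {n d : ℕ} (hn : 2 ≤ n) (hd : 0 < d) {t : ℝ}
    (h : 2 ^ (2 * n) * (d : ℝ) ^ (4 * n) < t) : 4 < √t :=
  calc (4 : ℝ) = 2 ^ 2 * 1 := by norm_num
    _ ≤ 2 ^ n * (d : ℝ) ^ (2 * n) := by
      gcongr
      exacts [one_le_two, one_le_pow₀ (mod_cast hd)]
    _ < √t := two_pow_mul_pow_lt_sqrt h

lemma sum_le_sqrt {n : ℕ} {d : Fin n → ℕ} {t : ℝ} (hn : n ≠ 0)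
    (h : ∀ i, 2 ^ (2 * n) * (d i : ℝ) ^ (4 * n) < t) : ∑ i, (d i : ℝ) ≤ √t := by
  have hmul (i : Fin n) : n * (d i : ℝ) ≤ √t :=
    calc n * (d i : ℝ) ≤ 2 ^ n * (d i : ℝ) ^ (2 * n) := by
          gcongr
          · exact_mod_cast Nat.lt_two_pow_self.le
          · exact_mod_cast Nat.le_self_pow (by lia) _
      _ ≤ √t := (two_pow_mul_pow_lt_sqrt (h i)).le
  have hn' : (0 : ℝ) < n := by positivity
  refine le_of_mul_le_mul_left ?_ hn'
  rw [mul_sum]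
  exact (sum_le_sum fun i _ ↦ hmul i).trans_eq (by simp)

lemma prod_div_eq_sqrt {n : ℕ} (hn : n ≠ 0) {d : Fin n → ℝ} (hd : ∀ i, 0 < d i) {t : ℝ}
    (ht : 0 ≤ t) :
    ∏ i, (∏ j, d j) ^ ((1 : ℝ) / n) * t ^ ((1 : ℝ) / (2 * n)) / d i = √t := by
  have hprod : 0 < ∏ j, d j := prod_pos fun j _ ↦ hd j
  have hpow : (t ^ ((1 : ℝ) / (2 * n))) ^ n = √t := by
    rw [sqrt_eq_rpow, ← rpow_mul_natCast ht]
    congr 1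
    field_simp
  rw [prod_div_distrib, prod_const, card_univ, Fintype.card_fin, mul_pow, hpow, one_div,
    rpow_inv_natCast_pow hprod.le hn, mul_div_cancel_left₀ _ hprod.ne']

lemma mul_rpow_mul_lt_of_lt_rpow {n t u A p : ℝ} (hn : 0 < n) (ht : 0 < t) (hu : 0 < u)
    (hA : 0 < A) (hp : 0 ≤ p)
    (h : t < A ^ (-(2 * n) / (2 * n + 1)) * u ^ (-2 / (2 * n + 1)) * p ^ (1 - 1 / (2 * n + 1))) :
    A * (u ^ (1 / n) * t ^ (1 / (2 * n))) * t < p := by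
  have hpow := rpow_lt_rpow ht.le h (z := (2 * n + 1) / (2 * n)) (by positivity)
  rw [mul_rpow (by positivity) (by positivity), mul_rpow (by positivity) (by positivity),
    ← rpow_mul hA.le, ← rpow_mul hu.le, ← rpow_mul hp,
    show -(2 * n) / (2 * n + 1) * ((2 * n + 1) / (2 * n)) = -1 by field_simp,
    show -2 / (2 * n + 1) * ((2 * n + 1) / (2 * n)) = -(1 / n) by field_simp,
    show (1 - 1 / (2 * n + 1)) * ((2 * n + 1) / (2 * n)) = 1 by field_simp; ring,
    show (2 * n + 1) / (2 * n) = 1 + 1 / (2 * n) by field_simp, rpow_add ht, rpow_one, rpow_one,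
    rpow_neg_one, rpow_neg hu.le, ← mul_inv, inv_mul_eq_div, lt_div_iff₀ (by positivity)] at hpow
  linarith

end Parameters

section Cosets

open Real

variable {K ι : Type*} [Field K]

theorem finite_and_ncard_le_of_eval_pow_eq [Fintype ι] {f : ι → K[X]} {x c : ι → K}
    (hm : ∀ i, 0 < (f i).natDegree) (hx : ∀ i j, (f j).IsRoot (x i) ↔ j = i)
    (hc : ∀ i, c i ≠ 0) {t : ℕ} {B : ℝ} (hB : 1 ≤ B) (hs : 2 ≤ ∑ i, (f i).natDegree)
    (hst : ∑ i, ((f i).natDegree : ℝ) ≤ √t) (ht : 4 < √t)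
    (hBt : √t ≤ ∏ i, B / (f i).natDegree)
    (hN : (⌊(Fintype.card ι + 1) * B * t⌋₊.factorial : K) ≠ 0) :
    {y | ∀ i, (f i).eval y ^ t = c i}.Finite ∧
      ({y | ∀ i, (f i).eval y ^ t = c i}.ncard : ℝ) ≤
        4 * (Fintype.card ι + 1) * (∑ i, ((f i).natDegree : ℝ)) * B * √t := by
  classical
  obtain ⟨E, hEt, hE, hsE⟩ := exists_stepanov_order hs (mod_cast hst) ht
  let S : Finset (ι → ℕ) := Fintype.piFinset fun i ↦ range (⌊B / (f i).natDegree⌋₊ + 1)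
  have hS : 2 * (E + 1) ≤ #S := by
    have := hE.trans (hBt.trans (prod_le_card_piFinset_range_floor fun i ↦ by positivity))
    exact_mod_cast this
  have hsE_le : (∑ i, (f i).natDegree) * E ≤ t := by nlinarith
  have htB : (t : ℝ) ≤ B * t := le_mul_of_one_le_left t.cast_nonneg hB
  have hN' : t + Fintype.card ι * B * t ≤ (Fintype.card ι + 1) * B * t := by linarith
  have hdeg : ∀ b ∈ S, (∑ i, (f i).natDegree) * E + t * ∑ i, (f i).natDegree * b i ≤
      ⌊(Fintype.card ι + 1) * B * t⌋₊ := by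
    intro b hb
    have hsum := sum_mul_le_of_mem_piFinset_range_floor hm (zero_le_one.trans hB) hb
    refine Nat.le_floor (hN'.trans' ?_)
    rw [Nat.cast_add, Nat.cast_mul t, mul_comm _ (t : ℝ)]
    gcongr
    exact_mod_cast hsum
  have hEN : E ≤ ⌊(Fintype.card ι + 1) * B * t⌋₊ := by
    refine Nat.le_floor (hN'.trans' (le_add_of_le_of_nonneg ?_ (by positivity)))
    exact_mod_cast (by nlinarith : E ≤ t)
  obtain ⟨hfin, hcard⟩ := finite_and_ncard_mul_le_of_eval_pow_eq
    (fun i ↦ ne_zero_of_natDegree_gt (hm i)) hx hc rfl hN hEN hEt hS hdeg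
  rw [Nat.le_floor_iff (by positivity), Nat.cast_mul, Nat.cast_add_one] at hcard
  refine ⟨hfin, le_of_mul_le_mul_right ?_ (show (0 : ℝ) < E + 1 by positivity)⟩
  calc _ ≤ (Fintype.card ι + 1) * B * t := hcard
    _ = (Fintype.card ι + 1) * B * √t * √t := by
        rw [mul_assoc _ √t, mul_self_sqrt (by positivity)]
    _ ≤ (Fintype.card ι + 1) * B * √t * (4 * (∑ i, (f i).natDegree : ℕ) * (E + 1)) := by gcongr
    _ = _ := by
      push_cast
      ring

lemma natDegree_pos_of_isRoot_iff [Nontrivial ι] {f : ι → K[X]} {x : ι → K}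
    (hx : ∀ i j, (f j).IsRoot (x i) ↔ j = i) (i : ι) : 0 < (f i).natDegree := by
  obtain ⟨j, hji⟩ := exists_ne i
  have hfi : f i ≠ 0 := fun h ↦ hji.symm ((hx j i).1 (by rw [h, IsRoot.def, eval_zero]))
  exact natDegree_pos_iff_degree_pos.2 (degree_pos_of_root hfi ((hx i i).2 rfl))

-- `hp` says that the characteristic of `K` is zero or at least `p`.
theorem main_theorem_general {n p : ℕ} (hn : 2 ≤ n) (hp : ((p - 1).factorial : K) ≠ 0)
    (Γ : Subgroup Kˣ) (g : Fin n → Kˣ) {f : Fin n → K[X]} {x : Fin n → K}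
    (hx : ∀ i j, (f j).IsRoot (x i) ↔ j = i)
    (hlow : ∀ i, (2 : ℝ) ^ (2 * n) * ((f i).natDegree : ℝ) ^ (4 * n) < Nat.card Γ)
    (hup : (Nat.card Γ : ℝ) < ((n : ℝ) + 1) ^ (-(2 * (n : ℝ)) / (2 * (n : ℝ) + 1)) *
      (∏ i, ((f i).natDegree : ℝ)) ^ (-(2 : ℝ) / (2 * (n : ℝ) + 1)) *
      (p : ℝ) ^ ((1 : ℝ) - 1 / (2 * (n : ℝ) + 1))) :
    {y : K | ∀ i, ∃ γ ∈ Γ, (f i).eval y = (g i : K) * γ}.Finite ∧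
      (Nat.card {y : K | ∀ i, ∃ γ ∈ Γ, (f i).eval y = (g i : K) * γ} : ℝ) ≤
        4 * ((n : ℝ) + 1) * (∑ i, ((f i).natDegree : ℝ)) *
          (∏ i, ((f i).natDegree : ℝ)) ^ ((1 : ℝ) / n) *
          (Nat.card Γ : ℝ) ^ ((1 : ℝ) / 2 + 1 / (2 * (n : ℝ))) := by
  have : NeZero n := ⟨by lia⟩
  have : Nontrivial (Fin n) := Fin.nontrivial_iff_two_le.2 hn
  have hm (i : Fin n) : 0 < (f i).natDegree := natDegree_pos_of_isRoot_iff hx i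
  have hsub : {y : K | ∀ i, ∃ γ ∈ Γ, (f i).eval y = (g i : K) * γ} ⊆
      {y | ∀ i, (f i).eval y ^ Nat.card Γ = (g i : K) ^ Nat.card Γ} := by
    intro y hy i
    obtain ⟨γ, hγ, hyγ⟩ := hy i
    have hγ_pow : γ ^ Nat.card Γ = 1 := orderOf_dvd_iff_pow_eq_one.1 (Γ.orderOf_dvd_natCard hγ)
    rw [hyγ, mul_pow, ← Units.val_pow_eq_pow_val γ, hγ_pow, Units.val_one, mul_one]
  generalize Nat.card Γ = t at *
  have ht : 4 < √t := four_lt_sqrt hn (hm 0) (hlow 0)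
  have ht1 : 1 ≤ (t : ℝ) := one_le_sqrt.1 (by linarith)
  have hprod : 1 ≤ ∏ i, ((f i).natDegree : ℝ) := mod_cast prod_pos fun i _ ↦ hm i
  have hsum : 2 ≤ ∑ i, (f i).natDegree :=
    calc 2 ≤ n := hn
      _ = ∑ _i : Fin n, 1 := by simp
      _ ≤ ∑ i, (f i).natDegree := sum_le_sum fun i _ ↦ hm i
  let B : ℝ := (∏ i, ((f i).natDegree : ℝ)) ^ ((1 : ℝ) / n) * (t : ℝ) ^ ((1 : ℝ) / (2 * n))
  have hB : 1 ≤ B := one_le_mul_of_one_le_of_one_le (one_le_rpow hprod (by positivity))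
    (one_le_rpow ht1 (by positivity))
  have hBt : ∏ i, B / (f i).natDegree = √t :=
    prod_div_eq_sqrt (NeZero.ne n) (fun i ↦ mod_cast hm i) t.cast_nonneg
  have hBp : (n + 1) * B * t < p := mul_rpow_mul_lt_of_lt_rpow
    (by positivity) (by positivity) (by positivity) (by positivity) (by positivity) hup
  have hN : (⌊(Fintype.card (Fin n) + 1) * B * t⌋₊.factorial : K) ≠ 0 := by
    rw [Fintype.card_fin]
    exact ne_zero_of_dvd_ne_zero hp (map_dvd (Nat.castRingHom K) (Nat.factorial_dvd_factorial
      (Nat.le_sub_one_of_lt ((Nat.floor_lt (by positivity)).2 hBp))))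
  obtain ⟨hfin, hcard⟩ := finite_and_ncard_le_of_eval_pow_eq hm hx
    (fun i ↦ pow_ne_zero t (g i).ne_zero) hB hsum (sum_le_sqrt (NeZero.ne n) hlow) ht hBt.ge hN
  refine ⟨hfin.subset hsub, (Nat.cast_le.2 (Set.ncard_le_ncard hsub hfin)).trans
    (hcard.trans_eq ?_)⟩
  rw [Fintype.card_fin, rpow_add (by positivity), ← sqrt_eq_rpow]
  ring

end Cosets

/-- Main theorem: bound on the number of `x ∈ F_p` with `f i (x)` in the coset
`g i • Γ` for all `i`, for an admissible set of polynomials. -/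
theorem main_theorem (p n : ℕ) [Fact p.Prime] (hn : 2 ≤ n)
    (Γ : Subgroup (ZMod p)ˣ) (g : Fin n → (ZMod p)ˣ)
    (f : Fin n → Polynomial (ZMod p)) (m : Fin n → ℕ)
    (hdeg : ∀ i, (f i).natDegree = m i) (hmono : Monotone m)
    (hadm : AdmissibleSet f)
    (hlow : (2 : ℝ) ^ (2 * n) * (m ⟨n - 1, by omega⟩ : ℝ) ^ (4 * n) < Nat.card Γ)
    (hup : (Nat.card Γ : ℝ) <
        ((n : ℝ) + 1) ^ (-(2 * (n : ℝ)) / (2 * (n : ℝ) + 1)) *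
          (∏ i, (m i : ℝ)) ^ (-(2 : ℝ) / (2 * (n : ℝ) + 1)) *
          (p : ℝ) ^ ((1 : ℝ) - 1 / (2 * (n : ℝ) + 1))) :
    (Nat.card {x : ZMod p | ∀ i : Fin n, ∃ γ ∈ Γ,
        (f i).eval x = ((g i : (ZMod p)ˣ) : ZMod p) * ((γ : (ZMod p)ˣ) : ZMod p)} : ℝ) ≤
      4 * ((n : ℝ) + 1) * (∑ i, (m i : ℝ)) * (∏ i, (m i : ℝ)) ^ ((1 : ℝ) / n) *
        (Nat.card Γ : ℝ) ^ ((1 : ℝ) / 2 + 1 / (2 * (n : ℝ))) := by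
  obtain rfl := funext hdeg
  obtain ⟨x, hx, hx', -⟩ := hadm
  have hroot (i j) : (f j).IsRoot (x i) ↔ j = i :=
    ⟨fun h ↦ by_contra fun hji ↦ hx' i j hji h, by rintro rfl; exact hx _⟩
  have hp : ((p - 1).factorial : ZMod p) ≠ 0 := by
    rw [Ne, ZMod.natCast_eq_zero_iff, (Fact.out : p.Prime).dvd_factorial]
    exact (Nat.sub_lt (NeZero.pos p) one_pos).not_ge
  refine (main_theorem_general hn hp Γ g hroot (fun i ↦ hlow.trans_le' ?_) hup).2
  gcongr
  exact hmono (Fin.mk_le_mk.2 (Nat.le_sub_one_of_lt i.2))
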